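/- arXiv:2008.01444 — 4 statements merged into one kernel-verified Lean document; each statement's English description precedes it below -/
import Mathlib

section
/- Let (Λ, Σ) be a measurable space, let κ be a Markov (probability) kernel from Λ to itself, let μ be a probability measure on Λ, and let p : Λ → ℝ be a bounded measurable function such that p(λ) = ∫ p dκ(λ) for μ-almost every λ. Let ν := μ.bind κ. Then Var_μ(p) ≤ Var_ν(p), i.e. ∫ p² dμ − (∫ p dμ)² ≤ ∫ p² dν − (∫ p dν)². -/
open MeasureTheory ProbabilityTheory

/-- Dispersion inequality: if a bounded measurable response function is `μ`-almost surely
invariant under averaging through a Markov kernel, then its variance under `μ` is at most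
its variance under the transformed measure `μ.bind κ`. -/
theorem unitary_invariance_dispersion_inequality
    {Λ : Type*} [MeasurableSpace Λ]
    (κ : Kernel Λ Λ) [IsMarkovKernel κ]
    (μ : Measure Λ) [IsProbabilityMeasure μ]
    (p : Λ → ℝ) (hp : Measurable p) (C : ℝ) (hC : ∀ x, |p x| ≤ C)
    (hinv : ∀ᵐ lam ∂μ, p lam = ∫ x, p x ∂(κ lam))
    (ν : Measure Λ) (hν : ν = μ.bind (fun lam => κ lam)) :
    ∫ lam, (p lam) ^ 2 ∂μ - (∫ lam, p lam ∂μ) ^ 2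
      ≤ ∫ x, (p x) ^ 2 ∂ν - (∫ x, p x ∂ν) ^ 2 := by
  have hb : ∀ (m : Measure Λ) [IsProbabilityMeasure m] (n : ℕ), Integrable (fun x => p x ^ n) m := by
    intro m _ n
    refine Integrable.of_bound (hp.pow_const n).aestronglyMeasurable (C ^ n) ?_
    filter_upwards with x
    rw [norm_pow, Real.norm_eq_abs]
    exact pow_le_pow_left₀ (abs_nonneg _) (hC x) n
  have hνp : IsProbabilityMeasure ν := by
    rw [hν]
    change IsProbabilityMeasure (μ.bind κ)
    infer_instance
  have hn : ∀ n : ℕ, ∫ x, p x ^ n ∂ν = ∫ l, ∫ x, p x ^ n ∂(κ l) ∂μ := by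
    intro n
    have h := hb ν n
    have hνc : ν = (κ ∘ₖ Kernel.const Unit μ) () := by
      rw [hν]
      exact Measure.comp_eq_comp_const_apply
    rw [hνc] at h ⊢
    have hc := Kernel.integral_comp h
    rwa [Kernel.const_apply] at hc
  have hi : Integrable (fun l => ∫ x, p x ^ 2 ∂(κ l)) μ := by
    refine Integrable.of_bound
      (((hp.pow_const 2).stronglyMeasurable).integral_kernel (κ := κ)).aestronglyMeasurable
      (C ^ 2) ?_
    filter_upwards with l
    have h := norm_integral_le_of_norm_le_const (μ := κ l) (f := fun x => p x ^ 2) (C := C ^ 2)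
      (by
        filter_upwards with x
        rw [norm_pow, Real.norm_eq_abs]
        exact pow_le_pow_left₀ (abs_nonneg _) (hC x) 2)
    simpa using h
  have h1 : ∫ x, p x ∂ν = ∫ l, p l ∂μ := by
    have h := hn 1
    simp only [pow_one] at h
    rw [h]
    exact (integral_congr_ae hinv).symm
  have h2 : ∫ l, p l ^ 2 ∂μ ≤ ∫ x, p x ^ 2 ∂ν := by
    rw [hn 2]
    refine integral_mono_ae (hb μ 2) hi ?_
    filter_upwards [hinv] with l hl
    have hm : MemLp p 2 (κ l) :=
      (memLp_two_iff_integrable_sq hp.aestronglyMeasurable).2 (hb (κ l) 2)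
    have hv := variance_nonneg p (κ l)
    rw [variance_eq_sub hm, ← hl] at hv
    simpa using hv
  rw [h1]
  linarith
end

section
/- Let (Λ, Σ) and (Λ′, Σ′) be measurable spaces, μ a probability measure on Λ, γ₁ a Markov kernel from Λ to Λ′, γ₂ a Markov kernel from Λ′ to Λ′, f : Λ′ → ℝ bounded measurable, and g : Λ → ℝ bounded measurable. Suppose (ancilla independence) g(λ) = ∫ f dγ₁(λ) for every λ ∈ Λ, and (unitary invariance) f(λ′) = ∫ f dγ₂(λ′) for (μ.bind γ₁)-almost every λ′. Then ∫ | g(λ) − ∫ (∫ f dγ₂(λ′)) γ₁(λ)(dλ′) | dμ(λ) = 0; that is, g agrees μ-almost surely with the average of f through the composed kernel γ₂ ∘ γ₁. -/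
open MeasureTheory ProbabilityTheory

/-- Combining ancilla independence and unitary invariance: the response function `g` of
the initial system agrees `μ`-almost surely with the average of `f` through the composed
kernel `γ₂ ∘ γ₁`. -/
theorem ancilla_and_unitary_invariance_composition
    {Λ Λ' : Type*} [MeasurableSpace Λ] [MeasurableSpace Λ']
    (μ : Measure Λ) [IsProbabilityMeasure μ]
    (γ₁ : Kernel Λ Λ') [IsMarkovKernel γ₁]
    (γ₂ : Kernel Λ' Λ') [IsMarkovKernel γ₂]
    (f : Λ' → ℝ) (hf : Measurable f) (Cf : ℝ) (hCf : ∀ x, |f x| ≤ Cf)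
    (g : Λ → ℝ) (hg : Measurable g) (Cg : ℝ) (hCg : ∀ x, |g x| ≤ Cg)
    (hAncilla : ∀ lam : Λ, g lam = ∫ x, f x ∂(γ₁ lam))
    (hUnitary : ∀ᵐ lam' ∂(μ.bind (fun lam => γ₁ lam)), f lam' = ∫ x, f x ∂(γ₂ lam')) :
    ∫ lam, |g lam - ∫ lam', (∫ x, f x ∂(γ₂ lam')) ∂(γ₁ lam)| ∂μ = 0 := by
  have h := Measure.ae_ae_of_ae_comp (μ := μ) (κ := γ₁) hUnitary
  have h2 : (fun lam => |g lam - ∫ lam', (∫ x, f x ∂(γ₂ lam')) ∂(γ₁ lam)|) =ᵐ[μ] 0 := by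
    filter_upwards [h] with lam hlam
    rw [hAncilla lam, integral_congr_ae hlam]
    simp
  rw [integral_congr_ae h2]
  simp
end

section
/- Let (Λ, Σ) be a measurable space, μ and ν probability measures on Λ, and p, q : Λ → ℝ measurable functions. Suppose that for every measurable f : Λ → ℝ the following biconditional holds: p = f μ-almost everywhere if and only if q = f ν-almost everywhere. Then: (i) p = q μ-almost everywhere and p = q ν-almost everywhere; and (ii) for every measurable set Δ with μ(Δ) = 0, one has ν(Δ ∩ {λ : q(λ) ≠ 0}) = 0. -/
open MeasureTheory

/-- Landsman's criterion for equality of λ-probabilities forces the two response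
functions to agree almost surely with respect to both preparation measures, and forces
the second measure to assign no weight to `μ`-null sets where the response is nonzero. -/
theorem landsman_criterion_consequences
    {Λ : Type*} [MeasurableSpace Λ]
    (μ ν : Measure Λ) [IsProbabilityMeasure μ] [IsProbabilityMeasure ν]
    (p q : Λ → ℝ) (hp : Measurable p) (hq : Measurable q)
    (hcrit : ∀ f : Λ → ℝ, Measurable f → ((p =ᵐ[μ] f) ↔ (q =ᵐ[ν] f))) :
    (p =ᵐ[μ] q) ∧ (p =ᵐ[ν] q)
      ∧ ∀ Δ : Set Λ, MeasurableSet Δ → μ Δ = 0 →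
          ν (Δ ∩ {lam | q lam ≠ 0}) = 0 := by
  refine ⟨(hcrit q hq).2 (ae_eq_refl q), ((hcrit p hp).1 (ae_eq_refl p)).symm, ?_⟩
  intro Δ hΔ h0
  have h1 : p =ᵐ[μ] Δᶜ.indicator p := by
    have h2 : ∀ᵐ x ∂μ, x ∉ Δ := measure_eq_zero_iff_ae_notMem.1 h0
    filter_upwards [h2] with x hx
    exact (Set.indicator_of_mem (show x ∈ Δᶜ from hx) p).symm
  have h3 := (hcrit _ (hp.indicator hΔ.compl)).1 h1
  apply measure_eq_zero_iff_ae_notMem.2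
  filter_upwards [h3] with x hx hmem
  apply hmem.2
  rw [hx]
  exact Set.indicator_of_notMem (show x ∉ Δᶜ from fun h => h hmem.1) p
end

section
/- Let n, ñ and M be positive natural numbers. Then Σ_{j=1}^{n} Σ_{ĵ=1}^{ñ} Σ_{m=1}^{M} 1/√((j + (m−1)·n)·(ĵ + (m−1)·ñ)) ≥ √(n·ñ) · ( Σ_{k=1}^{n·M} 1/k − Real.log n ). -/
lemma harmonic_aux (n M : ℕ) (hn : 0 < n) (hM : 0 < M) :
    (∑ k ∈ Finset.range (n * M), (1 : ℝ) / (k + 1)) - Real.log n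
      ≤ ∑ m ∈ Finset.range M, (1 : ℝ) / (m + 1) := by
  have h := Real.strictAnti_eulerMascheroniSeq'.antitone (Nat.le_mul_of_pos_left M hn)
  have h1 : n * M ≠ 0 := by positivity
  have hnR : (n : ℝ) ≠ 0 := by positivity
  have hMR : (M : ℝ) ≠ 0 := by positivity
  simp only [Real.eulerMascheroniSeq', h1, hM.ne', if_false, harmonic] at h
  push_cast at h
  rw [Real.log_mul hnR hMR] at h
  simp only [one_div]
  linarith

/-- Embezzlement double-sum lower bound from the proof of the extended
equiprobability theorem. -/
theorem embezzlement_double_sum_lower_bound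
    (n n' M : ℕ) (hn : 0 < n) (hn' : 0 < n') (hM : 0 < M) :
    ∑ j ∈ Finset.range n, ∑ j' ∈ Finset.range n', ∑ m ∈ Finset.range M,
        (1 : ℝ) / Real.sqrt ((((j : ℝ) + 1) + m * n) * (((j' : ℝ) + 1) + m * n'))
      ≥ Real.sqrt ((n : ℝ) * n') *
          ((∑ k ∈ Finset.range (n * M), (1 : ℝ) / (k + 1)) - Real.log n) := by
  have hs : 0 < Real.sqrt ((n : ℝ) * n') := by positivity
  have hsq : Real.sqrt ((n : ℝ) * n') * Real.sqrt ((n : ℝ) * n') = n * n' :=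
    Real.mul_self_sqrt (by positivity)
  have key : ∀ j ∈ Finset.range n, ∀ j' ∈ Finset.range n', ∀ m ∈ Finset.range M,
      1 / Real.sqrt ((n : ℝ) * n') * ((1 : ℝ) / ((m : ℝ) + 1)) ≤
      (1 : ℝ) / Real.sqrt ((((j : ℝ) + 1) + m * n) * (((j' : ℝ) + 1) + m * n')) := by
    intro j hj j' hj' m _
    have a : (j : ℝ) + 1 ≤ n := by exact_mod_cast Finset.mem_range.1 hj
    have b : (j' : ℝ) + 1 ≤ n' := by exact_mod_cast Finset.mem_range.1 hj'
    rw [div_mul_div_comm, one_mul]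
    apply one_div_le_one_div_of_le (by positivity)
    apply Real.sqrt_le_iff.2 ⟨by positivity, ?_⟩
    calc _ ≤ ((n : ℝ) + m * n) * (n' + m * n') := by gcongr
      _ = (Real.sqrt ((n : ℝ) * n') * Real.sqrt ((n : ℝ) * n')) * ((m : ℝ) + 1) ^ 2 := by
        rw [hsq]; ring
      _ = _ := by ring
  calc _ ≤ Real.sqrt ((n : ℝ) * n') * ∑ m ∈ Finset.range M, (1 : ℝ) / (m + 1) := by
        gcongr
        exact harmonic_aux n M hn hM
    _ = ∑ j ∈ Finset.range n, ∑ j' ∈ Finset.range n', ∑ m ∈ Finset.range M,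
        1 / Real.sqrt ((n : ℝ) * n') * ((1 : ℝ) / ((m : ℝ) + 1)) := by
        simp only [← Finset.mul_sum, Finset.sum_const, Finset.card_range, nsmul_eq_mul]
        rw [← mul_assoc, ← mul_assoc]
        congr 1
        rw [mul_assoc, mul_comm (n' : ℝ) n, one_div, eq_inv_mul_iff_mul_eq₀ hs.ne']
        exact hsq
    _ ≤ _ := Finset.sum_le_sum fun j hj => Finset.sum_le_sum fun j' hj' =>
        Finset.sum_le_sum fun m hm => key j hj j' hj' m hm
end
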